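/- Let V be an m-dimensional vector space, m = 2k+r, let α_1,…,α_r be 1-forms and β a 2-form on V with α_1∧…∧α_r∧β^k ≠ 0. Then the bivector Λ determined by the data (α_1∧…∧α_r, β) (i.e. the dual bivector of the restriction of β to the kernel of α_1∧…∧α_r, extended by zero) is represented, with respect to the volume form Ω = α_1∧…∧α_r∧β^k, by the (m-2)-form ω = k·α_1∧…∧α_r∧β^{k-1}; that is, α∧β'∧ω = Λ(α,β')·Ω for all 1-forms α,β'. -/

import Mathlib

open AlternatingMap

variable {K V : Type*} [RCLike K] [AddCommGroup V] [Module K V]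

/-- Recasting the degree of an alternating form. -/
noncomputable def acast {a b : ℕ} (h : a = b) (f : V [⋀^Fin a]→ₗ[K] K) : V [⋀^Fin b]→ₗ[K] K :=
  f.domDomCongr (finCongr h)

/-- A linear functional viewed as an alternating 1-form. -/
noncomputable def aw1 (α : Module.Dual K V) : V [⋀^Fin 1]→ₗ[K] K :=
  AlternatingMap.ofSubsingleton K V K 0 α

/-- Wedge product of alternating forms (shuffle-sum/determinant convention). -/
noncomputable def wedgeK {a b : ℕ} (f : V [⋀^Fin a]→ₗ[K] K) (g : V [⋀^Fin b]→ₗ[K] K) :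
    V [⋀^Fin (a + b)]→ₗ[K] K :=
  (TensorProduct.lid K K).toLinearMap.compAlternatingMap
    ((f.domCoprod g).domDomCongr finSumFinEquiv)

/-- `k`-th wedge power of a 2-form. -/
noncomputable def wpow (β : V [⋀^Fin 2]→ₗ[K] K) : (k : ℕ) → V [⋀^Fin (2 * k)]→ₗ[K] K
  | 0 => acast (by omega) (AlternatingMap.constOfIsEmpty K V (Fin 0) 1)
  | (k + 1) => acast (by omega) (wedgeK (wpow β k) β)

/-- Wedge product of a family of 1-forms. -/
noncomputable def wfam : (r : ℕ) → (Fin r → Module.Dual K V) → V [⋀^Fin r]→ₗ[K] K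
  | 0, _ => AlternatingMap.constOfIsEmpty K V (Fin 0) 1
  | (r + 1), α => acast (by omega) (wedgeK (aw1 (α 0)) (wfam r (α ∘ Fin.succ)))


namespace ShuffleAux

set_option linter.unusedSectionVars false

/-- Extension of a form to a function on lists. -/
noncomputable def hat {n : ℕ} (f : V [⋀^Fin n]→ₗ[K] K) (l : List V) : K :=
  if h : l.length = n then f (fun i => l.get (i.cast h.symm)) else 0

lemma hat_of_ne {n : ℕ} (f : V [⋀^Fin n]→ₗ[K] K) {l : List V} (h : l.length ≠ n) :
    hat f l = 0 := dif_neg h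

lemma hat_ofFn {n : ℕ} (f : V [⋀^Fin n]→ₗ[K] K) (v : Fin n → V) :
    hat f (List.ofFn v) = f v := by
  rw [hat, dif_pos (List.length_ofFn)]
  congr 1
  ext i
  simp

lemma hat_acast {a b : ℕ} (h : a = b) (f : V [⋀^Fin a]→ₗ[K] K) :
    hat (acast h f) = hat f := by
  subst h
  rfl

lemma hat_inj {n : ℕ} {f g : V [⋀^Fin n]→ₗ[K] K} (h : hat f = hat g) : f = g := by
  ext v
  rw [← hat_ofFn, ← hat_ofFn, h]

lemma hat_smul {n : ℕ} (c : K) (f : V [⋀^Fin n]→ₗ[K] K) (l : List V) :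
    hat (c • f) l = c * hat f l := by
  unfold hat
  split_ifs <;> simp

lemma hat_zero {n : ℕ} (l : List V) : hat (0 : V [⋀^Fin n]→ₗ[K] K) l = 0 := by
  unfold hat
  split_ifs <;> simp

/-- Interior product. -/
noncomputable def iota (x : V) : {n : ℕ} → (V [⋀^Fin n]→ₗ[K] K) → (V [⋀^Fin (n - 1)]→ₗ[K] K)
  | 0, _ => 0
  | (_ + 1), f => f.curryLeft x

lemma hat_cons {n : ℕ} (f : V [⋀^Fin n]→ₗ[K] K) (x : V) (l : List V) :
    hat f (x :: l) = hat (iota x f) l := by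
  cases n with
  | zero => rw [hat_of_ne _ (by simp)]; simp [iota, hat_zero]
  | succ n =>
    by_cases h : l.length = n
    · subst h
      have h1 : x :: l = List.ofFn (Fin.cons x l.get : Fin (l.length + 1) → V) := by
        simp
      have h2 := hat_ofFn (n := l.length) (f.curryLeft x) l.get
      rw [List.ofFn_get l] at h2
      rw [h1, hat_ofFn]
      exact h2.symm
    · rw [hat_of_ne _ (by simpa using h), hat_of_ne _ (by simpa using h)]

lemma ofFn_insertNth {W : Type*} {n : ℕ} (p : Fin (n + 1)) (x : W) (u : Fin n → W) :
    List.ofFn (Fin.insertNth (α := fun _ => W) p x u) = (List.ofFn u).insertIdx p x := by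
  induction n with
  | zero =>
    obtain rfl : p = 0 := Fin.ext (by omega)
    simp
  | succ n ih =>
    refine Fin.cases ?_ (fun q => ?_) p
    · simp [Fin.insertNth_zero']
    · rw [← Fin.cons_self_tail u, Fin.insertNth_succ_cons]
      rw [List.ofFn_cons, List.ofFn_cons, ih, Fin.val_succ, List.insertIdx_succ_cons]

lemma insertIdx_append_le {W : Type*} (s t : List W) (x : W) (p : ℕ) (h : p ≤ s.length) :
    (s ++ t).insertIdx p x = s.insertIdx p x ++ t := by
  induction s generalizing p with
  | nil => obtain rfl : p = 0 := by simpa using h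
           simp
  | cons y s ih =>
    cases p with
    | zero => simp
    | succ p => simp at h; simp [ih p h]

lemma insertIdx_append_ge {W : Type*} (s t : List W) (x : W) (q : ℕ) :
    (s ++ t).insertIdx (s.length + q) x = s ++ t.insertIdx q x := by
  induction s with
  | nil => simp
  | cons y s ih =>
    have : (y :: s).length + q = (s.length + q) + 1 := by simp; omega
    rw [this]
    simp [ih]

lemma hat_insertIdx {n : ℕ} (f : V [⋀^Fin n]→ₗ[K] K) (x : V) (l : List V) (p : ℕ)
    (hp : p ≤ l.length) : hat f (l.insertIdx p x) = (-1) ^ p * hat f (x :: l) := by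
  by_cases h : l.length + 1 = n
  · subst h
    have h1 : x :: l = List.ofFn (Fin.cons x l.get : Fin (l.length + 1) → V) := by
      simp
    have h2 : l.insertIdx p x = List.ofFn
        (Fin.insertNth (α := fun _ => V) (⟨p, by omega⟩ : Fin (l.length + 1)) x l.get) := by
      rw [ofFn_insertNth]; simp
    rw [h1, h2, hat_ofFn, hat_ofFn, AlternatingMap.map_insertNth]
    simp [Matrix.vecCons]
  · rw [hat_of_ne, hat_of_ne]
    · simp
    · simpa using h
    · rwa [List.length_insertIdx_of_le_length hp]

lemma perm_sum {n : ℕ} (F : (Fin (n + 1) → V) → K) (x : V) (v : Fin n → V) :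
    ∑ σ : Equiv.Perm (Fin (n + 1)), (((Equiv.Perm.sign σ : ℤ) : K) *
        F ((Fin.cons x v : Fin (n + 1) → V) ∘ σ)) =
      ∑ e : Equiv.Perm (Fin n), ((Equiv.Perm.sign e : ℤ) : K) *
        ∑ p : Fin (n + 1), (-1) ^ (p : ℕ) *
          F (Fin.insertNth (α := fun _ => V) p x (v ∘ e)) := by
  simp_rw [Finset.mul_sum]
  rw [← Fintype.sum_prod_type']
  symm
  let φ : Equiv.Perm (Fin n) × Fin (n + 1) → Equiv.Perm (Fin (n + 1)) := fun q =>
    Equiv.Perm.decomposeFin.symm (0, q.1) * q.2.cycleRange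
  have hφ : Function.Bijective φ := by
    rw [Fintype.bijective_iff_injective_and_card]
    constructor
    · rintro ⟨e, p⟩ ⟨e2, p2⟩ h
      have hp : p = p2 := by
        have h1 : φ (e, p) p = 0 := by simp [φ]
        have h2 : φ (e2, p2) p2 = 0 := by simp [φ]
        rw [← h] at h2
        exact (φ (e, p)).injective (h1.trans h2.symm)
      subst hp
      have := Equiv.Perm.decomposeFin.symm.injective (mul_right_cancel h)
      simp at this
      simp [this]
    · simp [Fintype.card_perm, Nat.factorial_succ, mul_comm]
  refine Fintype.sum_bijective φ hφ _ _ ?_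
  rintro ⟨e, p⟩
  have h1 : (Fin.cons x v : Fin (n + 1) → V) ∘ (φ (e, p)) =
      Fin.insertNth (α := fun _ => V) p x (v ∘ e) := by
    rw [← Fin.cons_comp_cycleRange]
    have : (Fin.cons x v : Fin (n + 1) → V) ∘ (Equiv.Perm.decomposeFin.symm (0, e))
      = Fin.cons x (v ∘ e) := by
      ext i
      refine Fin.cases ?_ (fun i => ?_) i <;> simp
    rw [← this]
    rfl
  rw [h1]
  simp [φ, Fin.sign_cycleRange]
  ring

lemma wedge_sum {a b : ℕ} (f : V [⋀^Fin a]→ₗ[K] K) (g : V [⋀^Fin b]→ₗ[K] K)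
    (v : Fin (a + b) → V) :
    ((a.factorial : K) * b.factorial) * wedgeK f g v =
      ∑ σ : Equiv.Perm (Fin (a + b)), ((Equiv.Perm.sign σ : ℤ) : K) *
        (f (fun i => v (σ (Fin.castAdd b i))) * g (fun i => v (σ (Fin.natAdd a i)))) := by
  have h := congrArg (fun F => TensorProduct.lid K K (F (v ∘ finSumFinEquiv)))
    (MultilinearMap.domCoprod_alternization_eq f g)
  simp only [Fintype.card_fin, AlternatingMap.smul_apply] at h
  rw [map_nsmul, nsmul_eq_mul] at h
  have e : wedgeK f g v = TensorProduct.lid K K (f.domCoprod g (v ∘ finSumFinEquiv)) := rfl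
  rw [e]
  push_cast at h
  rw [← h, MultilinearMap.alternatization_apply, map_sum]
  refine Fintype.sum_equiv (finSumFinEquiv.permCongr) _ _ ?_
  intro σ
  rw [Units.smul_def, map_zsmul, zsmul_eq_mul]
  simp [Equiv.permCongr_apply, MultilinearMap.domCoprod_apply]

lemma wedge_zero_left {a b : ℕ} (g : V [⋀^Fin b]→ₗ[K] K) :
    wedgeK (0 : V [⋀^Fin a]→ₗ[K] K) g = 0 := by
  ext v
  have h := wedge_sum (0 : V [⋀^Fin a]→ₗ[K] K) g v
  simpa [Nat.factorial_ne_zero] using h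

lemma wedge_zero_right {a b : ℕ} (f : V [⋀^Fin a]→ₗ[K] K) :
    wedgeK f (0 : V [⋀^Fin b]→ₗ[K] K) = 0 := by
  ext v
  have h := wedge_sum f (0 : V [⋀^Fin b]→ₗ[K] K) v
  simpa [Nat.factorial_ne_zero] using h

lemma hat_wedge_ofFn {a b n : ℕ} (h : a + b = n) (f : V [⋀^Fin a]→ₗ[K] K)
    (g : V [⋀^Fin b]→ₗ[K] K) (v : Fin n → V) :
    ((a.factorial : K) * b.factorial) * hat (wedgeK f g) (List.ofFn v) =
      ∑ σ : Equiv.Perm (Fin n), ((Equiv.Perm.sign σ : ℤ) : K) *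
        (hat f ((List.ofFn (v ∘ σ)).take a) * hat g ((List.ofFn (v ∘ σ)).drop a)) := by
  subst h
  rw [hat_ofFn, wedge_sum]
  refine Finset.sum_congr rfl fun σ _ => ?_
  have : List.ofFn (v ∘ σ) = List.ofFn (fun i => v (σ (Fin.castAdd b i))) ++
      List.ofFn (fun i => v (σ (Fin.natAdd a i))) := by
    rw [← List.ofFn_fin_append]
    congr 1
    ext i
    refine Fin.addCases (fun i => ?_) (fun i => ?_) i <;> simp
  rw [this, List.take_left' (by simp), List.drop_left' (by simp), hat_ofFn, hat_ofFn]

lemma core {a b n : ℕ} (h : a + b = n + 1) (f : V [⋀^Fin a]→ₗ[K] K)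
    (g : V [⋀^Fin b]→ₗ[K] K) (x : V) (u : List V) (hu : u.length = n) :
    ∑ p : Fin (n + 1), (-1 : K) ^ (p : ℕ) *
      (hat f ((u.insertIdx p x).take a) * hat g ((u.insertIdx p x).drop a)) =
    a * (hat (iota x f) (u.take (a - 1)) * hat g (u.drop (a - 1))) +
      (-1) ^ a * (b * (hat f (u.take a) * hat (iota x g) (u.drop a))) := by
  rw [Fin.sum_univ_eq_sum_range (fun p => (-1 : K) ^ (p : ℕ) *
      (hat f ((u.insertIdx p x).take a) * hat g ((u.insertIdx p x).drop a))), ← h,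
    Finset.sum_range_add]
  congr 1
  · rw [Finset.sum_congr rfl (g := fun _ =>
      (hat (iota x f) (u.take (a - 1)) * hat g (u.drop (a - 1))))]
    · simp
    · intro p hp
      rw [Finset.mem_range] at hp
      have hl : (u.take (a - 1)).length = a - 1 := by simp; omega
      have e : u.insertIdx p x = (u.take (a - 1)).insertIdx p x ++ u.drop (a - 1) := by
        rw [← insertIdx_append_le _ _ _ _ (by omega), List.take_append_drop]
      have hl2 : ((u.take (a - 1)).insertIdx p x).length = a := by
        rw [List.length_insertIdx_of_le_length (by omega)]; omega
      rw [e, List.take_left' hl2, List.drop_left' hl2, hat_insertIdx _ _ _ _ (by omega),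
        hat_cons]
      have : (-1 : K) ^ p * (-1) ^ p = 1 := by rw [← mul_pow]; simp
      linear_combination (hat (iota x f) (u.take (a - 1)) * hat g (u.drop (a - 1))) * this
  · rw [Finset.sum_congr rfl (g := fun _ =>
      (-1) ^ a * (hat f (u.take a) * hat (iota x g) (u.drop a)))]
    · simp; ring
    · intro p hp
      rw [Finset.mem_range] at hp
      have hl : (u.take a).length = a := by simp; omega
      have e : u.insertIdx (a + p) x = u.take a ++ (u.drop a).insertIdx p x := by
        rw [← insertIdx_append_ge, List.take_append_drop, hl]
      rw [e, List.take_left' hl, List.drop_left' hl,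
        hat_insertIdx _ _ _ _ (by simp; omega), hat_cons]
      have : (-1 : K) ^ p * (-1) ^ p = 1 := by rw [← mul_pow]; simp
      rw [pow_add]
      linear_combination ((-1) ^ a * (hat f (u.take a) * hat (iota x g) (u.drop a))) * this

lemma leibniz {a b : ℕ} (f : V [⋀^Fin a]→ₗ[K] K) (g : V [⋀^Fin b]→ₗ[K] K) (x : V)
    (l : List V) :
    hat (wedgeK f g) (x :: l) = hat (wedgeK (iota x f) g) l +
      (-1) ^ a * hat (wedgeK f (iota x g)) l := by
  by_cases h : a + b = l.length + 1
  · have hfac : ((a.factorial : K) * b.factorial) ≠ 0 := by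
      simp [Nat.factorial_ne_zero]
    apply mul_left_cancel₀ hfac
    have e1 : x :: l = List.ofFn (Fin.cons x l.get : Fin (l.length + 1) → V) := by simp
    rw [e1, hat_wedge_ofFn h, perm_sum
      (F := fun w => hat f ((List.ofFn w).take a) * hat g ((List.ofFn w).drop a))]
    simp_rw [ofFn_insertNth]
    simp_rw [fun e : Equiv.Perm (Fin l.length) =>
      core h f g x (List.ofFn (l.get ∘ e)) (by simp)]
    simp_rw [mul_add, Finset.sum_add_distrib]
    have A : (a.factorial : K) * b.factorial * hat (wedgeK (iota x f) g) l =
        ∑ e : Equiv.Perm (Fin l.length), ((Equiv.Perm.sign e : ℤ) : K) *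
        (a * (hat (iota x f) ((List.ofFn (l.get ∘ e)).take (a - 1)) *
          hat g ((List.ofFn (l.get ∘ e)).drop (a - 1)))) := by
      cases a with
      | zero =>
        rw [hat_of_ne _ (by omega)]; simp
      | succ a =>
        have := hat_wedge_ofFn (n := l.length) (by omega) (iota x f) g l.get
        rw [List.ofFn_get] at this
        simp_rw [mul_left_comm _ ((a + 1 : ℕ) : K)]
        rw [← Finset.mul_sum, ← this, Nat.factorial_succ]
        simp only [Nat.add_sub_cancel]
        push_cast
        ring
    have B : (a.factorial : K) * b.factorial * hat (wedgeK f (iota x g)) l =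
        ∑ e : Equiv.Perm (Fin l.length), ((Equiv.Perm.sign e : ℤ) : K) *
        (b * (hat f ((List.ofFn (l.get ∘ e)).take a) *
          hat (iota x g) ((List.ofFn (l.get ∘ e)).drop a))) := by
      cases b with
      | zero =>
        rw [hat_of_ne _ (by omega)]; simp
      | succ b =>
        have := hat_wedge_ofFn (n := l.length) (by omega) f (iota x g) l.get
        rw [List.ofFn_get] at this
        simp_rw [mul_left_comm _ ((b + 1 : ℕ) : K)]
        rw [← Finset.mul_sum, ← this, Nat.factorial_succ]
        simp only [Nat.add_sub_cancel]
        push_cast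
        ring
    rw [mul_left_comm _ ((-1 : K) ^ a), A, B]
    simp_rw [mul_left_comm _ ((-1 : K) ^ a)]
    rw [← Finset.mul_sum]
  · rw [hat_of_ne _ (by simpa using fun hh => h hh.symm)]
    have A : hat (wedgeK (iota x f) g) l = 0 := by
      cases a with
      | zero =>
        simp only [iota, wedge_zero_left, hat_zero]
      | succ a => exact hat_of_ne _ (by omega)
    have B : hat (wedgeK f (iota x g)) l = 0 := by
      cases b with
      | zero =>
        simp only [iota, wedge_zero_right, hat_zero]
      | succ b => exact hat_of_ne _ (by omega)
    rw [A, B]; simp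

end ShuffleAux

namespace ShuffleAux

set_option linter.unusedSectionVars false

/-- Signed shuffle product of functions on lists. -/
def sh : List V → (List V → K) → (List V → K) → K
  | [], F, G => F [] * G []
  | x :: l, F, G => sh l (fun t => F (x :: t)) G +
      sh l (fun t => (-1) ^ t.length * F t) (fun t => G (x :: t))

/-- Product. -/
def mu (F G : List V → K) : List V → K := fun l => sh l F G

/-- Interior product on list functions. -/
def io (x : V) (F : List V → K) : List V → K := fun t => F (x :: t)

/-- Grading involution. -/
def sg (F : List V → K) : List V → K := fun t => (-1) ^ t.length * F t

/-- Unit. -/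
def un : List V → K := fun t => if t = [] then 1 else 0

/-- One-form. -/
def on (δ : Module.Dual K V) : List V → K
  | [x] => δ x
  | _ => 0

lemma mu_nil (F G : List V → K) : mu F G [] = F [] * G [] := rfl

lemma io_mu (x : V) (F G : List V → K) : io x (mu F G) = mu (io x F) G + mu (sg F) (io x G) :=
  rfl

lemma io_sg (x : V) (F : List V → K) : io x (sg F) = -sg (io x F) := by
  ext t; simp [io, sg, pow_succ]

lemma sg_sg (F : List V → K) : sg (sg F) = F := by
  ext t
  have : (-1 : K) ^ t.length * (-1) ^ t.length = 1 := by rw [← mul_pow]; simp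
  simp [sg, ← mul_assoc, this]

lemma io_add (x : V) (F G : List V → K) : io x (F + G) = io x F + io x G := rfl
lemma io_smul (x : V) (c : K) (F : List V → K) : io x (c • F) = c • io x F := rfl
lemma sg_add (F G : List V → K) : sg (F + G) = sg F + sg G := by ext; simp [sg, mul_add]
lemma sg_smul (c : K) (F : List V → K) : sg (c • F) = c • sg F := by
  ext; simp [sg]; ring

lemma ext_io {F G : List V → K} (h0 : F [] = G []) (h : ∀ x, io x F = io x G) : F = G := by
  ext l
  cases l with
  | nil => exact h0
  | cons x l => exact congrFun (h x) l

lemma mu_cons (F G : List V → K) (x : V) (l : List V) :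
    mu F G (x :: l) = mu (io x F) G l + mu (sg F) (io x G) l := rfl

lemma add_mu (F F2 G : List V → K) : mu (F + F2) G = mu F G + mu F2 G := by
  ext l
  induction l generalizing F F2 G with
  | nil => simp [mu_nil, add_mul]
  | cons x l ih =>
    simp only [Pi.add_apply] at ih
    simp only [Pi.add_apply, mu_cons, io_add, sg_add, ih]
    ring

lemma mu_add (F G G2 : List V → K) : mu F (G + G2) = mu F G + mu F G2 := by
  ext l
  induction l generalizing F G G2 with
  | nil => simp [mu_nil, mul_add]
  | cons x l ih =>
    simp only [Pi.add_apply] at ih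
    simp only [Pi.add_apply, mu_cons, io_add, ih]
    ring

lemma smul_mu (c : K) (F G : List V → K) : mu (c • F) G = c • mu F G := by
  ext l
  induction l generalizing F G with
  | nil => simp [mu_nil, mul_assoc]
  | cons x l ih =>
    simp only [Pi.smul_apply, smul_eq_mul] at ih
    simp only [Pi.smul_apply, smul_eq_mul, mu_cons, io_smul, sg_smul, ih]
    ring

lemma mu_smul (c : K) (F G : List V → K) : mu F (c • G) = c • mu F G := by
  ext l
  induction l generalizing F G with
  | nil => simp [mu_nil]; ring
  | cons x l ih =>
    simp only [Pi.smul_apply, smul_eq_mul] at ih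
    simp only [Pi.smul_apply, smul_eq_mul, mu_cons, io_smul, ih]
    ring

lemma zero_mu (G : List V → K) : mu 0 G = 0 := by
  simpa using smul_mu (0 : K) 0 G

lemma mu_zero (G : List V → K) : mu G 0 = 0 := by
  simpa using mu_smul (0 : K) G 0

lemma neg_mu (F G : List V → K) : mu (-F) G = -mu F G := by
  simpa using smul_mu (-1 : K) F G

lemma mu_neg (F G : List V → K) : mu F (-G) = -mu F G := by
  simpa using mu_smul (-1 : K) F G

lemma sg_mu (F G : List V → K) : sg (mu F G) = mu (sg F) (sg G) := by
  ext l
  induction l generalizing F G with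
  | nil => simp [mu_nil, sg]
  | cons x l ih =>
    have e : sg (mu F G) (x :: l) = - (sg (io x (mu F G)) l) := by
      simp [sg, io, pow_succ]
    rw [e, io_mu, sg_add, Pi.add_apply, ih, ih, mu_cons, io_sg, io_sg, neg_mu, mu_neg]
    simp
    ring

lemma mu_assoc (F G H : List V → K) : mu (mu F G) H = mu F (mu G H) := by
  ext l
  induction l generalizing F G H with
  | nil => simp [mu_nil, mul_assoc]
  | cons x l ih =>
    simp only [mu_cons, io_mu, add_mu, mu_add, Pi.add_apply, ih, sg_mu]
    ring

lemma io_un (x : V) : io x (un : List V → K) = 0 := by ext t; simp [io, un]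
lemma sg_un : sg (un : List V → K) = un := by
  ext t
  cases t <;> simp [sg, un]

lemma un_mu (G : List V → K) : mu un G = G := by
  ext l
  induction l generalizing G with
  | nil => simp [mu_nil, un]
  | cons x l ih => rw [mu_cons, io_un, zero_mu, sg_un, ih]; simp [io]

lemma mu_un (G : List V → K) : mu G un = G := by
  ext l
  induction l generalizing G with
  | nil => simp [mu_nil, un]
  | cons x l ih => rw [mu_cons, io_un, mu_zero, ih]; simp [io]

lemma io_on (x : V) (δ : Module.Dual K V) : io x (on δ) = δ x • (un : List V → K) := by
  ext t
  cases t <;> simp [io, on, un]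

lemma sg_on (δ : Module.Dual K V) : sg (on δ) = - on δ := by
  ext t
  rcases t with _ | ⟨x, _ | ⟨y, t⟩⟩ <;> simp [sg, on]

lemma mu_on (F : List V → K) (δ : Module.Dual K V) : mu F (on δ) = mu (on δ) (sg F) := by
  ext l
  induction l generalizing F with
  | nil => simp [mu_nil, on]
  | cons x l ih =>
    rw [mu_cons, mu_cons, io_on, smul_mu, mu_smul, un_mu, mu_un, sg_on, io_sg, neg_mu, mu_neg, ih]
    simp
    ring

lemma on_on_swap (γ δ : Module.Dual K V) : mu (on γ) (on δ) = - mu (on δ) (on γ) := by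
  rw [mu_on, sg_on, mu_neg]

lemma on_on (δ : Module.Dual K V) : mu (on δ) (on δ) = 0 := by
  have h := on_on_swap δ δ
  exact self_eq_neg.mp h

lemma hat_aw1 (δ : Module.Dual K V) : hat (aw1 δ) = on δ := by
  ext t
  rcases t with _ | ⟨x, _ | ⟨y, t⟩⟩ <;> simp [hat, on, aw1]

lemma sg_hat {n : ℕ} (f : V [⋀^Fin n]→ₗ[K] K) : sg (hat f) = (-1 : K) ^ n • hat f := by
  ext t
  by_cases h : t.length = n
  · simp [sg, h]
  · simp [sg, hat_of_ne f h]

lemma io_hat {n : ℕ} (x : V) (f : V [⋀^Fin n]→ₗ[K] K) : io x (hat f) = hat (iota x f) := by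
  ext t
  exact hat_cons f x t

lemma hat_const : hat (AlternatingMap.constOfIsEmpty K V (Fin 0) (1 : K)) = un := by
  ext t
  cases t <;> simp [hat, un]

lemma hat_wedge {a b : ℕ} (f : V [⋀^Fin a]→ₗ[K] K) (g : V [⋀^Fin b]→ₗ[K] K) :
    hat (wedgeK f g) = mu (hat f) (hat g) := by
  ext l
  induction l generalizing a b with
  | nil =>
    rw [mu_nil]
    by_cases h : a = 0 ∧ b = 0
    · obtain ⟨rfl, rfl⟩ := h
      have := hat_wedge_ofFn (n := 0) rfl f g Fin.elim0
      simpa using this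
    · rw [hat_of_ne _ (by simp; omega)]
      by_cases ha : a = 0
      · rw [hat_of_ne g (by simp; omega), mul_zero]
      · rw [hat_of_ne f (by simp; omega), zero_mul]
  | cons x l ih =>
    rw [leibniz, ih, ih, mu_cons, io_hat, io_hat, sg_hat, smul_mu]
    simp

section main

variable {r : ℕ} (α : Fin r → Module.Dual K V) (β : V [⋀^Fin 2]→ₗ[K] K)

lemma hat_wfam_succ (α : Fin (r + 1) → Module.Dual K V) :
    hat (wfam (r + 1) α) = mu (on (α 0)) (hat (wfam r (α ∘ Fin.succ))) := by
  rw [wfam, hat_acast, hat_wedge, hat_aw1]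

lemma hat_wpow_zero : hat (wpow β 0) = un := by
  rw [wpow, hat_acast, hat_const]

lemma hat_wpow_succ (k : ℕ) : hat (wpow β (k + 1)) = mu (hat (wpow β k)) (hat β) := by
  rw [wpow, hat_acast, hat_wedge]

lemma on_wfam {r : ℕ} (α : Fin r → Module.Dual K V) (i : Fin r) :
    mu (on (α i)) (hat (wfam r α)) = 0 := by
  induction r with
  | zero => exact i.elim0
  | succ r ih =>
    rw [hat_wfam_succ, ← mu_assoc]
    refine Fin.cases ?_ (fun i => ?_) i
    · rw [on_on, zero_mu]
    · have := ih (α ∘ Fin.succ) i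
      rw [on_on_swap, neg_mu, mu_assoc]
      simp only [Function.comp_apply] at this
      rw [this, mu_zero, neg_zero]

lemma on_add (γ δ : Module.Dual K V) : on (γ + δ) = on γ + on δ := by
  ext t
  rcases t with _ | ⟨x, _ | ⟨y, t⟩⟩ <;> simp [on]

lemma on_smul (c : K) (δ : Module.Dual K V) : on (c • δ) = c • on δ := by
  ext t
  rcases t with _ | ⟨x, _ | ⟨y, t⟩⟩ <;> simp [on]

lemma on_zero : on (0 : Module.Dual K V) = 0 := by
  ext t
  rcases t with _ | ⟨x, _ | ⟨y, t⟩⟩ <;> simp [on]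

lemma span_wfam (ε : Module.Dual K V) (h : ε ∈ Submodule.span K (Set.range α)) :
    mu (on ε) (hat (wfam r α)) = 0 := by
  induction h using Submodule.span_induction with
  | mem x hx => obtain ⟨i, rfl⟩ := hx; exact on_wfam α i
  | zero => rw [on_zero, zero_mu]
  | add x y _ _ hx hy => rw [on_add, add_mu, hx, hy, add_zero]
  | smul c x _ hx => rw [on_smul, smul_mu, hx, smul_zero]

lemma io_wfam {r : ℕ} (α : Fin r → Module.Dual K V) (x : V) (hx : ∀ i, α i x = 0) :
    io x (hat (wfam r α)) = 0 := by
  induction r with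
  | zero => rw [wfam, hat_const, io_un]
  | succ r ih =>
    rw [hat_wfam_succ, io_mu, io_on, hx, ih (α ∘ Fin.succ) (fun i => hx _), mu_zero, zero_smul, zero_mu,
      add_zero]

lemma sg_wpow (k : ℕ) : sg (hat (wpow β k)) = hat (wpow β k) := by
  rw [sg_hat]; simp

lemma io_wpow (k : ℕ) (x : V) (b : Module.Dual K V) (hb : io x (hat β) = on b) :
    io x (hat (wpow β (k + 1))) = ((k : K) + 1) • mu (on b) (hat (wpow β k)) := by
  induction k with
  | zero =>
    rw [hat_wpow_succ, hat_wpow_zero, un_mu, mu_un, hb]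
    simp
  | succ k ih =>
    rw [hat_wpow_succ β (k + 1), io_mu, ih, sg_wpow, hb, mu_on, sg_wpow, smul_mu, mu_assoc,
      ← hat_wpow_succ]
    push_cast
    simp only [add_smul, one_smul]

end main

end ShuffleAux

/-- Lemma 2: with `m = 2k + r` (here `k ≥ 1` written as `k+1`),
1-forms `α₁,…,α_r` and a 2-form `β` with `α₁∧…∧α_r∧β^k ≠ 0`, the bivector determined
by the data `(α₁∧…∧α_r, β)` — i.e. the dual bivector `Λ(γ,δ) = β(Pγ, Pδ)` of the
restriction of `β` to `W = ⋂ Ker αᵢ`, where `Pγ ∈ W` and `β(Pγ, ·)|_W = γ|_W` —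
is represented by `(k·α₁∧…∧α_r∧β^{k-1}, α₁∧…∧α_r∧β^k)`. -/
theorem stmt_2 [FiniteDimensional K V] (r k : ℕ)
    (hdim : Module.finrank K V = 2 * (k + 1) + r)
    (α : Fin r → Module.Dual K V) (β : V [⋀^Fin 2]→ₗ[K] K)
    (hne : wedgeK (wfam r α) (wpow β (k + 1)) ≠ 0)
    (P : Module.Dual K V →ₗ[K] V)
    (hP1 : ∀ γ : Module.Dual K V, P γ ∈ ⨅ i : Fin r, LinearMap.ker (α i))
    (hP2 : ∀ γ : Module.Dual K V, ∀ w ∈ ⨅ i : Fin r, LinearMap.ker (α i),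
      β ![P γ, w] = γ w) :
    ∀ γ δ : Module.Dual K V,
      acast (by omega)
          (wedgeK (aw1 γ) (wedgeK (aw1 δ)
            (((k : K) + 1) • wedgeK (wfam r α) (wpow β k))))
        = β ![P γ, P δ] • wedgeK (wfam r α) (wpow β (k + 1)) := by
  open ShuffleAux in
  intro γ δ
  apply hat_inj
  have hx : ∀ i, α i (P δ) = 0 := by
    have := hP1 δ
    simpa [Submodule.mem_iInf] using this
  obtain ⟨b, hbw⟩ : ∃ b : Module.Dual K V, ∀ w, b w = β ![P δ, w] := by
    refine ⟨β.toMultilinearMap.toLinearMap ![P δ, 0] 1, fun w => ?_⟩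
    have e : Function.update ![P δ, 0] 1 w = ![P δ, w] := by
      ext i
      fin_cases i <;> simp
    rw [← e]
    rfl
  have hb : io (P δ) (hat β) = on b := by
    ext t
    rcases t with _ | ⟨x, _ | ⟨y, t⟩⟩
    · simp [io, on, hat]
    · have : [P δ, x] = List.ofFn ![P δ, x] := by simp
      change hat β [P δ, x] = b x
      rw [hbw, this, hat_ofFn]
    · simp [io, on, hat]
  have hspan : b - δ ∈ Submodule.span K (Set.range α) := by
    apply mem_span_of_iInf_ker_le_ker
    intro w hw
    have := hP2 δ w hw
    simp [hbw, this]
  have hbA : mu (on b) (hat (wfam r α)) = mu (on δ) (hat (wfam r α)) := by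
    have h1 : b = (b - δ) + δ := by simp
    rw [h1, on_add, add_mu, span_wfam α _ hspan, zero_add]
  have hΩ : io (P δ) (hat (wedgeK (wfam r α) (wpow β (k + 1)))) =
      ((k : K) + 1) • mu (on δ) (mu (hat (wfam r α)) (hat (wpow β k))) := by
    rw [hat_wedge, io_mu, io_wfam α _ hx, zero_mu, zero_add, io_wpow β k _ b hb, mu_smul,
      ← mu_assoc, mu_on, sg_sg, hbA, mu_assoc]
  have h0 : wedgeK (aw1 γ) (wedgeK (wfam r α) (wpow β (k + 1))) = 0 := by
    ext v
    apply AlternatingMap.map_linearDependent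
    intro hv
    have := hv.fintype_card_le_finrank
    simp at this
    omega
  have h1 : mu (on γ) (hat (wedgeK (wfam r α) (wpow β (k + 1)))) = 0 := by
    rw [← hat_aw1, ← hat_wedge, h0]
    ext t
    exact hat_zero t
  have h2 := congrArg (io (P δ)) h1
  rw [io_mu, io_on, smul_mu, un_mu, sg_on, neg_mu, hΩ, mu_smul] at h2
  have h3 : β ![P γ, P δ] = γ (P δ) := hP2 γ _ (hP1 δ)
  have hs : ∀ {n : ℕ} (c : K) (f : V [⋀^Fin n]→ₗ[K] K), hat (c • f) = c • hat f :=
    fun c f => funext fun l => hat_smul c f l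
  rw [hat_acast, hat_wedge, hat_wedge, hs, hat_aw1, hat_aw1, mu_smul, mu_smul, hs, h3,
    hat_wedge (wfam r α) (wpow β k)]
  have h4 : io (P δ) (0 : List V → K) = 0 := rfl
  rw [h4, ← sub_eq_add_neg, sub_eq_zero] at h2
  exact h2.symm
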